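/- Let H be a well-formed complete history and let lt assign to each event of H a key (logical time, process identifier) ∈ ℕ × ℕ, where the process identifier component equals the process at which the event occurs, such that distinct events receive distinct keys and, within each process subhistory H|p, the logical-time components are strictly increasing along the subhistory. Let H^lt be the sequence consisting of the same events as H, sorted in increasing lexicographic order of their keys. Then H is sequentially consistent if and only if H^lt is sequentially consistent. -/

import Mathlib

/-- An event of a read/write register operation execution: it is either the
invocation (`isInv = true`) or the response (`isInv = false`) of an operation,
identified by an operation identifier `op`, occurring at process `proc`,
targeting register `reg`.  `isRead` tells whether the operation is a read or a
write, and `value` is the value written (for a write) resp. returned (for a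
read). -/
structure Event where
  op : ℕ
  proc : ℕ
  reg : ℕ
  isRead : Bool
  value : ℤ
  isInv : Bool
deriving DecidableEq

/-- A history is a finite sequence of events. -/
abbrev Hist := List Event

/-- `H|p`: the process subhistory of `H`, i.e. the subsequence of events
occurring at process `p`. -/
def procSub (H : Hist) (p : ℕ) : Hist := H.filter (fun e => e.proc = p)

/-- `H|x`: the register subhistory of `H`, i.e. the subsequence of events of
operations targeting register `x`. -/
def regSub (H : Hist) (x : ℕ) : Hist := H.filter (fun e => e.reg = x)

/-- `e2` is the response event matching the invocation event `e1`. -/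
def Matches (e1 e2 : Event) : Prop :=
  e1.isInv = true ∧ e2.isInv = false ∧ e1.op = e2.op ∧ e1.proc = e2.proc ∧
    e1.reg = e2.reg ∧ e1.isRead = e2.isRead ∧ e1.value = e2.value

/-- A history is sequential if its first event is an invocation and every
invocation event (except possibly the last event) is immediately followed by
the matching response event. -/
inductive IsSequential : Hist → Prop
  | nil : IsSequential []
  | single (e : Event) : e.isInv = true → IsSequential [e]
  | cons (e1 e2 : Event) (rest : Hist) :
      Matches e1 e2 → IsSequential rest → IsSequential (e1 :: e2 :: rest)

/-- No two distinct events of a history are the invocation of the same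
operation, nor the response of the same operation. -/
def UniqueEvents (H : Hist) : Prop :=
  H.Pairwise (fun e1 e2 => ¬(e1.op = e2.op ∧ e1.isInv = e2.isInv))

/-- All events of one and the same operation agree on the process, register,
operation type and value. -/
def Coherent (H : Hist) : Prop :=
  ∀ e1 ∈ H, ∀ e2 ∈ H, e1.op = e2.op →
    e1.proc = e2.proc ∧ e1.reg = e2.reg ∧ e1.isRead = e2.isRead ∧ e1.value = e2.value

/-- A history is well-formed if every process subhistory is sequential
(together with the bookkeeping conditions making operations well-defined). -/
def WellFormed (H : Hist) : Prop :=
  UniqueEvents H ∧ Coherent H ∧ ∀ p : ℕ, IsSequential (procSub H p)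

/-- A history is complete if every invocation event has a matching response
event. -/
def Complete (H : Hist) : Prop :=
  ∀ e ∈ H, e.isInv = true → ∃ e' ∈ H, Matches e e'

/-- `H ≃ H'`: two histories are equivalent iff `H|p = H'|p` for every
process `p`. -/
def HEquiv (H H' : Hist) : Prop := ∀ p : ℕ, procSub H p = procSub H' p

/-- Operation `o1` precedes operation `o2` in history `H`
(`o1 <_H o2`): the response event of `o1` occurs before the invocation event
of `o2` in `H`. -/
def OpBefore (H : Hist) (o1 o2 : ℕ) : Prop :=
  ∃ i j : Fin H.length, i < j ∧
    (H.get i).op = o1 ∧ (H.get i).isInv = false ∧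
    (H.get j).op = o2 ∧ (H.get j).isInv = true

/-- A sequential history is legal if every read of a register returns the
value written by the closest preceding write to that register, or the initial
value `0` if no such write exists. -/
def Legal (S : Hist) : Prop :=
  ∀ k : Fin S.length, (S.get k).isInv = true → (S.get k).isRead = true →
    ((∃ j : Fin S.length, j < k ∧ (S.get j).isInv = true ∧ (S.get j).isRead = false ∧
        (S.get j).reg = (S.get k).reg ∧ (S.get j).value = (S.get k).value ∧
        ∀ l : Fin S.length, j < l → l < k → (S.get l).isInv = true →
          (S.get l).isRead = false → (S.get l).reg ≠ (S.get k).reg) ∨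
      ((S.get k).value = 0 ∧
        ∀ j : Fin S.length, j < k → (S.get j).isInv = true →
          (S.get j).isRead = false → (S.get j).reg ≠ (S.get k).reg))

/-- `SC H`: history `H` is sequentially consistent iff there is a legal
sequential history `S` with `S ≃ H`. -/
def SC (H : Hist) : Prop :=
  ∃ S : Hist, IsSequential S ∧ Legal S ∧ HEquiv S H

/-- `LIN H`: history `H` is linearizable iff there is a legal sequential
history `S` with `S ≃ H` such that `o1 <_H o2` implies `o1 <_S o2` for all
operations `o1, o2` of `H`. -/
def LIN (H : Hist) : Prop :=
  ∃ S : Hist, IsSequential S ∧ Legal S ∧ HEquiv S H ∧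
    ∀ o1 o2 : ℕ, OpBefore H o1 o2 → OpBefore S o1 o2

/-- The lexicographic order on keys `(logical time, process identifier)`. -/
def KeyLt (k1 k2 : ℕ × ℕ) : Prop := Prod.Lex (· < ·) (· < ·) k1 k2

/-- `IsLtHistory H lt Hlt`: `Hlt` is the logical-time history `H^lt`
corresponding to `H`, i.e. the sequence consisting of the same events as `H`,
sorted in increasing lexicographic order of their keys
`lt e = (logical time of e, process identifier of e)`. -/
def IsLtHistory (H : Hist) (lt : Event → ℕ × ℕ) (Hlt : Hist) : Prop :=
  Hlt.Perm H ∧ Hlt.Pairwise (fun e1 e2 => KeyLt (lt e1) (lt e2))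

/-- Let `H` be a well-formed complete history with a logical-time
key assignment `lt` (keys are pairs (logical time, process id), the second
component is the event's process, distinct events get distinct keys, and
logical times strictly increase along each process subhistory), and let
`H^lt` be the sequence of the same events sorted in increasing lexicographic
key order.  Then `H` is sequentially consistent iff `H^lt` is sequentially
consistent. -/
theorem sc_iff_sc_lt_history (H : Hist) (hwf : WellFormed H) (hcom : Complete H)
    (lt : Event → ℕ × ℕ)
    (hproc : ∀ e ∈ H, (lt e).2 = e.proc)
    (hdist : H.Pairwise (fun e1 e2 => lt e1 ≠ lt e2))
    (hmono : ∀ p : ℕ, (procSub H p).Pairwise (fun e1 e2 => (lt e1).1 < (lt e2).1))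
    (Hlt : Hist) (hlt : IsLtHistory H lt Hlt) :
    SC H ↔ SC Hlt := by
  have key : ∀ p : ℕ, procSub H p = procSub Hlt p := by
    intro p
    have hperm : (procSub H p).Perm (procSub Hlt p) := (hlt.1.filter _).symm
    have h1 : (procSub H p).Pairwise (fun e1 e2 => KeyLt (lt e1) (lt e2)) :=
      (hmono p).imp (fun h => Prod.lex_def.mpr (Or.inl h))
    have h2 : (procSub Hlt p).Pairwise (fun e1 e2 => KeyLt (lt e1) (lt e2)) :=
      hlt.2.sublist List.filter_sublist
    refine List.Perm.eq_of_pairwise ?_ h1 h2 hperm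
    intro a b _ _ hab hba
    exfalso
    unfold KeyLt at hab hba
    rw [Prod.lex_def] at hab hba
    omega
  have hiff : ∀ S : Hist, HEquiv S H ↔ HEquiv S Hlt := by
    intro S
    unfold HEquiv
    simp only [key]
  unfold SC
  simp only [hiff]
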